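/- arXiv:1811.09726 — 3 statements merged into one kernel-verified Lean document; each statement's English description precedes it below -/
import Mathlib

section
/- Let $N$ be a positive natural number, let $r$ be a natural number, and let $p$ be a real number with $0 \leq p \leq 1$ and $r \leq pN$. Then the binomial tail satisfies $\sum_{k=0}^{r} \binom{N}{k} p^k (1-p)^{N-k} \leq e^{-2t^2 N}$, where $t = p - r/N$. -/
open MeasureTheory ProbabilityTheory in
lemma aux_hoeff (p s : ℝ) (hp0 : 0 ≤ p) (hp1 : p ≤ 1) :
    p * Real.exp s + (1 - p) ≤ Real.exp (s * p + s ^ 2 / 8) := by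
  have hq : 0 ≤ 1 - p := by linarith
  let μ : Measure ℝ := ENNReal.ofReal p • Measure.dirac 1 + ENNReal.ofReal (1 - p) • Measure.dirac 0
  have hμ : IsProbabilityMeasure μ := ⟨by
    simp only [μ, Measure.add_apply, Measure.smul_apply, measure_univ, smul_eq_mul, mul_one]
    rw [← ENNReal.ofReal_add hp0 hq]; simp⟩
  have hint : ∀ f : ℝ → ℝ, ∫ x, f x ∂μ = p * f 1 + (1 - p) * f 0 := by
    intro f
    have h1 : Integrable f (ENNReal.ofReal p • Measure.dirac (1:ℝ)) :=
      (integrable_dirac (by simp)).smul_measure (by simp)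
    have h0 : Integrable f (ENNReal.ofReal (1 - p) • Measure.dirac (0:ℝ)) :=
      (integrable_dirac (by simp)).smul_measure (by simp)
    rw [integral_add_measure h1 h0, integral_smul_measure, integral_smul_measure]
    simp [hp0, hq]
  have hb : ∀ᵐ x ∂μ, (fun x : ℝ => x) x ∈ Set.Icc (0:ℝ) 1 := by
    rw [ae_add_measure_iff]
    constructor
    · apply Measure.ae_smul_measure
      rw [ae_dirac_eq]; simp
    · apply Measure.ae_smul_measure
      rw [ae_dirac_eq]; simp
  have h := (hasSubgaussianMGF_of_mem_Icc (μ := μ) (X := fun x => x) (by fun_prop) hb).mgf_le s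
  rw [mgf, hint] at h
  simp only [hint] at h
  have e : p * Real.exp s + (1 - p) = Real.exp (s * p) *
     (p * Real.exp (s * (1 - p)) + (1 - p) * Real.exp (s * (0 - p))) := by
    have e1 : Real.exp s = Real.exp (s * p) * Real.exp (s * (1 - p)) := by
      rw [← Real.exp_add]; ring_nf
    have e2 : 1 = Real.exp (s * p) * Real.exp (s * (0 - p)) := by
      rw [← Real.exp_add]; ring_nf; simp
    linear_combination p * e1 + (1 - p) * e2
  rw [e, Real.exp_add]
  gcongr
  have e3 : p * 1 + (1 - p) * 0 = p := by ring
  rw [e3] at h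
  have e4 : (((‖(1:ℝ) - 0‖₊ / 2) ^ 2 : NNReal) : ℝ) * s ^ 2 / 2 = s ^ 2 / 8 := by
    simp; ring
  rw [e4] at h
  exact h

open Finset in
/-- Hoeffding's inequality for the binomial distribution: if `0 ≤ p ≤ 1` and `r ≤ pN`,
then the probability that a binomial random variable with parameters `N`, `p` is at most
`r` is bounded by `exp (-2 t² N)` with `t = p - r/N`. -/
theorem stmt_3 (N r : ℕ) (hN : 0 < N) (p : ℝ) (hp0 : 0 ≤ p) (hp1 : p ≤ 1)
    (hr : (r : ℝ) ≤ p * N) :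
    ∑ k ∈ range (r + 1), (N.choose k : ℝ) * p ^ k * (1 - p) ^ (N - k) ≤
      Real.exp (-2 * (p - r / N) ^ 2 * N) := by
  have hN' : (0:ℝ) < N := by exact_mod_cast hN
  have hq : 0 ≤ 1 - p := by linarith
  have hrN : r ≤ N := by
    have : (r:ℝ) ≤ N := hr.trans (by nlinarith)
    exact_mod_cast this
  obtain ⟨t, ht⟩ : ∃ t, t = p - r / N := ⟨_, rfl⟩
  have ht0 : 0 ≤ t := by
    rw [ht, sub_nonneg, div_le_iff₀ hN']; exact hr
  have hrt : (r:ℝ) = (p - t) * N := by rw [ht]; field_simp; ring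
  rw [← ht]
  calc _ ≤ ∑ k ∈ range (r + 1), Real.exp (4 * t * r) *
        ((p * Real.exp (-4 * t)) ^ k * (1 - p) ^ (N - k) * (N.choose k : ℝ)) := by
        apply sum_le_sum
        intro k hk
        have hk' : (k:ℝ) ≤ r := by exact_mod_cast Nat.lt_succ_iff.mp (mem_range.mp hk)
        have h1 : 1 ≤ Real.exp (4 * t * r) * Real.exp (-4 * t) ^ k := by
          rw [← Real.exp_nat_mul, ← Real.exp_add]
          apply Real.one_le_exp
          nlinarith [mul_nonneg ht0 (sub_nonneg.2 hk')]
        have h2 : 0 ≤ (N.choose k : ℝ) * p ^ k * (1 - p) ^ (N - k) := by positivity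
        rw [mul_pow]
        nlinarith [mul_le_mul_of_nonneg_left h1 h2]
    _ ≤ ∑ k ∈ range (N + 1), Real.exp (4 * t * r) *
        ((p * Real.exp (-4 * t)) ^ k * (1 - p) ^ (N - k) * (N.choose k : ℝ)) := by
        apply sum_le_sum_of_subset_of_nonneg
        · exact range_subset_range.2 (by omega)
        · intros; positivity
    _ = Real.exp (4 * t * r) * (p * Real.exp (-4 * t) + (1 - p)) ^ N := by
        rw [← mul_sum, ← add_pow]
    _ ≤ Real.exp (4 * t * r) * Real.exp ((-4 * t) * p + (-4 * t) ^ 2 / 8) ^ N := by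
        gcongr
        exact aux_hoeff p _ hp0 hp1
    _ = _ := by
        rw [← Real.exp_nat_mul, ← Real.exp_add, hrt]
        ring_nf
end

section
/- Fix a real number $p$ with $0 < p \leq 1$. Then $\sum_{k=0}^{5n-15} \binom{N}{k} p^k (1-p)^{N-k} \to 0$ as $n \to \infty$, where $N = \binom{n}{2}$. (In the Gilbert random graph model $G(n,p)$, this sum is the probability that a graph on $n$ vertices has at most $5n-15$ edges; hence by Mader's theorem the probability that $G(n,p)$ is not intrinsically knotted tends to $0$.) -/
open Finset Filter in
/-- For fixed `0 < p ≤ 1`, the probability that the Gilbert random graph `G(n,p)` has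
at most `5n - 15` edges tends to `0` as `n → ∞`. -/
theorem stmt_4 (p : ℝ) (hp0 : 0 < p) (hp1 : p ≤ 1) :
    Tendsto (fun n : ℕ =>
        ∑ k ∈ range (5 * n - 15 + 1),
          ((n.choose 2).choose k : ℝ) * p ^ k * (1 - p) ^ (n.choose 2 - k))
      atTop (nhds 0) := by
  have h1p : 0 ≤ 1 - p := by linarith
  have hq0 : 0 ≤ 1 - p / 2 := by linarith
  have hq1 : 1 - p / 2 < 1 := by linarith
  obtain ⟨m, hm⟩ := exists_pow_lt_of_lt_one (show (0 : ℝ) < 1 / 64 by norm_num) hq1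
  have hm5 : (1 - p / 2) ^ (m + 5) ≤ 1 / 64 :=
    (pow_le_pow_of_le_one hq0 hq1.le (by omega)).trans hm.le
  have hlim : Tendsto (fun n : ℕ => (1 / 2 : ℝ) ^ n) atTop (nhds 0) :=
    tendsto_pow_atTop_nhds_zero_of_lt_one (by norm_num) (by norm_num)
  refine squeeze_zero' (Eventually.of_forall fun n => ?_) ?_ hlim
  · exact sum_nonneg fun k _ => by positivity
  filter_upwards [eventually_ge_atTop (2 * (m + 5) + 1)] with n hn
  have hN : (m + 5) * n ≤ n.choose 2 := by
    rw [Nat.choose_two_right, Nat.le_div_iff_mul_le (by norm_num)]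
    calc (m + 5) * n * 2 = n * (2 * (m + 5)) := by ring
      _ ≤ n * (n - 1) := Nat.mul_le_mul_left _ (by omega)
  have hN5 : 5 * n ≤ n.choose 2 := le_trans (Nat.mul_le_mul_right _ (by omega)) hN
  generalize n.choose 2 = N at hN hN5
  calc ∑ k ∈ range (5 * n - 15 + 1), (N.choose k : ℝ) * p ^ k * (1 - p) ^ (N - k)
      ≤ ∑ k ∈ range (5 * n - 15 + 1),
          2 ^ (5 * n) * ((p / 2) ^ k * (1 - p) ^ (N - k) * (N.choose k : ℝ)) := by
        refine sum_le_sum fun k hk => ?_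
        have hk' : k ≤ 5 * n := by have := mem_range.1 hk; omega
        have h2 : (2 : ℝ) ^ k ≤ 2 ^ (5 * n) := pow_le_pow_right₀ (by norm_num) hk'
        have e : (N.choose k : ℝ) * p ^ k * (1 - p) ^ (N - k)
            = 2 ^ k * ((p / 2) ^ k * (1 - p) ^ (N - k) * (N.choose k : ℝ)) := by
          rw [div_pow]; field_simp
        rw [e]
        exact mul_le_mul_of_nonneg_right h2 (by positivity)
    _ ≤ ∑ k ∈ range (N + 1),
          2 ^ (5 * n) * ((p / 2) ^ k * (1 - p) ^ (N - k) * (N.choose k : ℝ)) := by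
        refine sum_le_sum_of_subset_of_nonneg ?_ fun k _ _ => by positivity
        exact range_subset_range.2 (by omega)
    _ = 2 ^ (5 * n) * (1 - p / 2) ^ N := by
        rw [← mul_sum, ← add_pow]; congr 2; ring
    _ ≤ 2 ^ (5 * n) * (1 - p / 2) ^ ((m + 5) * n) :=
        mul_le_mul_of_nonneg_left (pow_le_pow_of_le_one hq0 hq1.le hN) (by positivity)
    _ = (32 * (1 - p / 2) ^ (m + 5)) ^ n := by
        rw [mul_pow, pow_mul, pow_mul]; norm_num
    _ ≤ (1 / 2) ^ n := pow_le_pow_left₀ (by positivity) (by linarith) n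
end

section
/- The sequence $n \mapsto \dfrac{n! \cdot \sum_{k=0}^{5n-15} \binom{N}{k}}{\binom{N}{q}}$ of real numbers, where $N = \binom{n}{2}$ and $q = \lfloor N/2 \rfloor$, tends to $0$ as $n \to \infty$. (Since by Wright's theorem the number of isomorphism classes of graphs on $n$ vertices with exactly $q$ edges is asymptotic to $\binom{N}{q}/n!$, this shows that the proportion of isomorphism classes of graphs on $n$ vertices having at most $5n-15$ edges tends to $0$.) -/
theorem aux_nat (n : ℕ) (hn : 5 ≤ n) (h : n ^ 24 * 4 ≤ 2 ^ (n - 1)) :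
    (n.factorial * ∑ k ∈ Finset.range (5 * n - 15 + 1), (n.choose 2).choose k) * 2 ^ n
      ≤ (n.choose 2).choose (n.choose 2 / 2) := by
  have hN2 : n.choose 2 * 2 = n * (n - 1) := by
    rw [Nat.choose_two_right]
    exact Nat.div_mul_cancel (Nat.even_mul_pred_self n).two_dvd
  have hN : n.choose 2 + 1 ≤ n ^ 2 := by
    obtain ⟨m, rfl⟩ : ∃ m, n = m + 1 := ⟨n - 1, by omega⟩
    simp only [Nat.add_sub_cancel] at hN2
    nlinarith
  generalize hNN : n.choose 2 = N at *
  have hC : 2 ^ N ≤ n ^ 2 * N.choose (N / 2) := by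
    rw [← Nat.sum_range_choose]
    calc _ ≤ ∑ k ∈ Finset.range (N + 1), N.choose (N / 2) :=
          Finset.sum_le_sum fun k _ => Nat.choose_le_middle k N
      _ = (N + 1) * N.choose (N / 2) := by simp
      _ ≤ _ := Nat.mul_le_mul_right _ hN
  have hS : ∑ k ∈ Finset.range (5 * n - 15 + 1), N.choose k ≤ n ^ (10 * n + 2) := by
    calc _ ≤ ∑ k ∈ Finset.range (5 * n - 15 + 1), n ^ (10 * n) := by
          refine Finset.sum_le_sum fun k hk => ?_
          rw [Finset.mem_range] at hk
          calc N.choose k ≤ N ^ k := Nat.choose_le_pow N k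
            _ ≤ (n ^ 2) ^ k := Nat.pow_le_pow_left (by omega) k
            _ = n ^ (2 * k) := by rw [pow_mul]
            _ ≤ _ := Nat.pow_le_pow_right (by omega) (by omega)
      _ = (5 * n - 15 + 1) * n ^ (10 * n) := by simp
      _ ≤ n ^ 2 * n ^ (10 * n) := Nat.mul_le_mul_right _ (by
          have : 5 * n ≤ n ^ 2 := by nlinarith
          omega)
      _ = _ := by ring
  have hF : n.factorial ≤ n ^ n := Nat.factorial_le_pow n
  have hK : n ^ (12 * n) * 2 ^ n ≤ 2 ^ N := by
    rw [← Nat.pow_le_pow_iff_left (n := 2) (by norm_num)]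
    calc (n ^ (12 * n) * 2 ^ n) ^ 2 = (n ^ 24 * 4) ^ n := by
          rw [mul_pow, mul_pow, ← pow_mul, ← pow_mul, ← pow_mul, show (4:ℕ) = 2 ^ 2 by norm_num,
            ← pow_mul]
          congr 2 <;> ring
      _ ≤ (2 ^ (n - 1)) ^ n := Nat.pow_le_pow_left h n
      _ = (2 ^ N) ^ 2 := by rw [← pow_mul, ← pow_mul, hN2, mul_comm]
  refine le_of_mul_le_mul_left (a := n ^ 2) ?_ (by positivity)
  refine le_trans ?_ hC
  refine le_trans ?_ hK
  rw [← mul_assoc]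
  refine Nat.mul_le_mul_right _ ?_
  calc _ ≤ n ^ 2 * (n ^ n * n ^ (10 * n + 2)) := by gcongr
    _ = n ^ (11 * n + 4) := by ring
    _ ≤ _ := Nat.pow_le_pow_right (by omega) (by omega)

open Finset Filter in
/-- With `N = C(n,2)` and `q = ⌊N/2⌋`, the sequence
`n! · (∑_{k=0}^{5n-15} C(N,k)) / C(N,q)` tends to `0` as `n → ∞`. -/
theorem stmt_11 :
    Tendsto (fun n : ℕ =>
        ((n.factorial : ℝ) * ∑ k ∈ range (5 * n - 15 + 1), ((n.choose 2).choose k : ℝ)) /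
          ((n.choose 2).choose (n.choose 2 / 2) : ℝ))
      atTop (nhds 0) := by
  have h1 := tendsto_pow_const_div_const_pow_of_one_lt 24 (r := (2:ℝ)) (by norm_num)
  have h2 : ∀ᶠ n : ℕ in atTop, (n:ℝ) ^ 24 / 2 ^ n < 1 / 8 :=
    h1.eventually_lt_const (by norm_num)
  have h3 : Tendsto (fun n : ℕ => (1 / 2 : ℝ) ^ n) atTop (nhds 0) :=
    tendsto_pow_atTop_nhds_zero_of_lt_one (by norm_num) (by norm_num)
  refine squeeze_zero' (Eventually.of_forall fun n => by positivity) ?_ h3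
  filter_upwards [h2, eventually_ge_atTop 5] with n hn h5
  have h : n ^ 24 * 4 ≤ 2 ^ (n - 1) := by
    rw [div_lt_iff₀ (by positivity)] at hn
    have h8 : n ^ 24 * 8 ≤ 2 ^ n := by
      have : (n:ℝ) ^ 24 * 8 ≤ 2 ^ n := by linarith
      exact_mod_cast this
    obtain ⟨m, rfl⟩ : ∃ m, n = m + 1 := ⟨n - 1, by omega⟩
    rw [pow_succ 2 m] at h8
    simp only [Nat.add_sub_cancel]
    omega
  have key := aux_nat n h5 h
  have hpos : 0 < (n.choose 2).choose (n.choose 2 / 2) := Nat.choose_pos (Nat.div_le_self _ _)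
  have key' : ((n.factorial : ℝ) * ∑ k ∈ range (5 * n - 15 + 1), ((n.choose 2).choose k : ℝ))
      * 2 ^ n ≤ ((n.choose 2).choose (n.choose 2 / 2) : ℝ) := by exact_mod_cast key
  rw [div_le_iff₀ (by exact_mod_cast hpos), one_div, inv_pow, inv_mul_eq_div,
    le_div_iff₀ (by positivity)]
  exact key'
end
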